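/- There is no single-agent protocol σ such that the execution of σ halts from every start node of every port-labeled graph and halts with decision 'yes' from v in G if and only if G is a path. (That is, the problem of deciding whether the underlying graph is a path is not single-agent decidable.) -/

import Mathlib

/-- A port-labeled graph: a finite connected simple undirected graph in which each
node `v` of degree `deg v` has its incident edges assigned distinct port numbers
`1,…,deg v`.  It is encoded by a fixed-point-free involution on darts: the dart
`(v, i)` (for `i < deg v`, representing port `i+1` at `v`) is matched with the
dart `(u, j)` when the edge with port `i+1` at `v` leads to `u` entering via port `j+1`. -/
structure PortGraph where
  /-- number of nodes; the nodes are `Fin n` -/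
  n : ℕ
  npos : 0 < n
  /-- degree of each node -/
  deg : Fin n → ℕ
  /-- the dart-matching function (only its values on `i < deg v` are relevant) -/
  mtch : Fin n → ℕ → Fin n × ℕ
  mtch_lt : ∀ (v : Fin n) (i : ℕ), i < deg v → (mtch v i).2 < deg (mtch v i).1
  mtch_invol : ∀ (v : Fin n) (i : ℕ), i < deg v →
      mtch (mtch v i).1 (mtch v i).2 = (v, i)
  /-- no self-loops -/
  no_loops : ∀ (v : Fin n) (i : ℕ), i < deg v → (mtch v i).1 ≠ v
  /-- no multiple edges -/
  no_multi : ∀ (v : Fin n) (i j : ℕ), i < deg v → j < deg v →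
      (mtch v i).1 = (mtch v j).1 → i = j
  /-- connectivity -/
  connected : ∀ u v : Fin n,
    Relation.ReflTransGen (fun a b => ∃ i < deg a, (mtch a i).1 = b) u v

/-- Adjacency in a port-labeled graph. -/
def PortGraph.Adj (G : PortGraph) (u v : Fin G.n) : Prop :=
  ∃ i < G.deg u, (G.mtch u i).1 = v

/-- Rooted trees with edges labeled by pairs of port numbers, used as (truncated) views. -/
inductive ViewTree : Type
  | node : List (ℕ × ℕ × ViewTree) → ViewTree

/-- The truncated view `V^t(v)` at depth `t` from node `v`. -/
def PortGraph.view (G : PortGraph) : ℕ → Fin G.n → ViewTree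
  | 0, _ => ViewTree.node []
  | t + 1, v => ViewTree.node <| (List.range (G.deg v)).map fun i =>
      (i + 1, (G.mtch v i).2 + 1, G.view t (G.mtch v i).1)

/-- The equal-views equivalence relation (`u ∼ v` iff `V(u) = V(v)`). -/
def PortGraph.viewSetoid (G : PortGraph) : Setoid (Fin G.n) where
  r u v := ∀ t, G.view t u = G.view t v
  iseqv := ⟨fun _ _ => rfl, fun h t => (h t).symm, fun h h' t => (h t).trans (h' t)⟩

/-- `n̂`: the number of equivalence classes of the equal-views relation
(the number of nodes of the quotient graph). -/
noncomputable def PortGraph.nhat (G : PortGraph) : ℕ := Nat.card (Quotient G.viewSetoid)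

/-- `G.reachIn k u v` means there is a walk of length at most `k` from `u` to `v`,
i.e. the graph distance from `u` to `v` is at most `k`. -/
def PortGraph.reachIn (G : PortGraph) : ℕ → Fin G.n → Fin G.n → Prop
  | 0, u, v => u = v
  | k + 1, u, v => G.reachIn k u v ∨ ∃ w, G.reachIn k u w ∧ G.Adj w v

/-- A port-preserving isomorphism between port-labeled graphs. -/
def IsPortIso (G H : PortGraph) (e : Fin G.n ≃ Fin H.n) : Prop :=
  (∀ v, H.deg (e v) = G.deg v) ∧
  ∀ (v : Fin G.n) (i : ℕ), i < G.deg v →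
    H.mtch (e v) i = (e (G.mtch v i).1, (G.mtch v i).2)
/-- An observation of the agent: the degree of the current node and the port
number through which the agent entered it (`0` in the initial round). -/
abbrev Obs : Type := ℕ × ℕ

/-- An action of a (deciding) mobile agent: either halt with a Boolean decision
(`true` = "yes", `false` = "no"), or move leaving through port `p`. -/
inductive AgentAction : Type
  | halt (decision : Bool)
  | move (p : ℕ)

/-- A single-agent protocol: a function from finite sequences of observations to actions. -/
abbrev AgentProtocol : Type := List Obs → AgentAction

/-- The state of an agent: current position, port of entry (`0` initially), and
the history of observations made so far (including the current one). -/
structure AgentState (G : PortGraph) where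
  pos : Fin G.n
  entry : ℕ
  hist : List Obs

/-- One round of the execution of protocol `σ`. -/
def PortGraph.stepAgent (G : PortGraph) (σ : AgentProtocol) (c : AgentState G) : AgentState G :=
  let next : Fin G.n × ℕ :=
    match σ c.hist with
    | .halt _ => (c.pos, c.entry)
    | .move p =>
        if 1 ≤ p ∧ p - 1 < G.deg c.pos then
          ((G.mtch c.pos (p - 1)).1, (G.mtch c.pos (p - 1)).2 + 1)
        else (c.pos, c.entry)
  ⟨next.1, next.2, c.hist ++ [(G.deg next.1, next.2)]⟩

/-- The execution of protocol `σ` in `G` from start node `v`: state at round `t`. -/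
def PortGraph.run (G : PortGraph) (σ : AgentProtocol) (v : Fin G.n) : ℕ → AgentState G
  | 0 => ⟨v, 0, [(G.deg v, 0)]⟩
  | t + 1 => G.stepAgent σ (G.run σ v t)

/-- The observation made at round `t` of the execution. -/
def PortGraph.obsAt (G : PortGraph) (σ : AgentProtocol) (v : Fin G.n) (t : ℕ) : Obs :=
  (G.deg (G.run σ v t).pos, (G.run σ v t).entry)

/-- The action taken at round `t` of the execution. -/
def PortGraph.actAt (G : PortGraph) (σ : AgentProtocol) (v : Fin G.n) (t : ℕ) : AgentAction :=
  σ (G.run σ v t).hist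

/-- The execution halts (for the first time) at round `t` with decision `b`. -/
def PortGraph.haltsAtWith (G : PortGraph) (σ : AgentProtocol) (v : Fin G.n) (t : ℕ) (b : Bool) :
    Prop :=
  G.actAt σ v t = AgentAction.halt b ∧ ∀ s < t, ∀ b', G.actAt σ v s ≠ AgentAction.halt b'

/-- The execution of `σ` from `v` in `G` halts. -/
def PortGraph.halts (G : PortGraph) (σ : AgentProtocol) (v : Fin G.n) : Prop :=
  ∃ t b, G.haltsAtWith σ v t b

/-- The execution of `σ` from `v` in `G` halts with decision `b`. -/
def PortGraph.decides (G : PortGraph) (σ : AgentProtocol) (v : Fin G.n) (b : Bool) : Prop :=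
  ∃ t, G.haltsAtWith σ v t b

/-- `σ` decides the problem `P` (sets of pairs (graph, start node) closed under
port-preserving isomorphisms): it always halts, with "yes" exactly on instances of `P`. -/
def DecidesProblem (σ : AgentProtocol) (P : (G : PortGraph) → Fin G.n → Prop) : Prop :=
  (∀ (G : PortGraph) (v : Fin G.n), G.halts σ v) ∧
  ∀ (G : PortGraph) (v : Fin G.n), (G.decides σ v true ↔ P G v)

/-- The family `σ` of protocols indexed by certificates (binary strings) verifies `P`. -/
def VerifiesProblem (σ : List Bool → AgentProtocol) (P : (G : PortGraph) → Fin G.n → Prop) :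
    Prop :=
  (∀ (x : List Bool) (G : PortGraph) (v : Fin G.n), G.halts (σ x) v) ∧
  ∀ (G : PortGraph) (v : Fin G.n),
    (P G v → ∃ x, G.decides (σ x) v true) ∧
    (¬ P G v → ∀ x, G.decides (σ x) v false)

/-- `P` is mobile agent decidable by a single agent. -/
def MAD1 (P : (G : PortGraph) → Fin G.n → Prop) : Prop := ∃ σ, DecidesProblem σ P

/-- `P` is mobile agent verifiable by a single agent. -/
def MAV1 (P : (G : PortGraph) → Fin G.n → Prop) : Prop := ∃ σ, VerifiesProblem σ P

/-- A problem closed under port-preserving isomorphisms. -/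
def IsoClosed (P : (G : PortGraph) → Fin G.n → Prop) : Prop :=
  ∀ (G H : PortGraph) (e : Fin G.n ≃ Fin H.n), IsPortIso G H e →
    ∀ v : Fin G.n, (P G v ↔ P H (e v))

/-- `G` is a path: its nodes can be arranged in a sequence so that consecutive
nodes are adjacent, the two end nodes have degree `1` and all other nodes have
degree `2`. -/
def IsPath (G : PortGraph) : Prop :=
  ∃ (_h2 : 2 ≤ G.n) (f : Fin G.n ≃ Fin G.n),
    (∀ (i : ℕ) (h : i + 1 < G.n), G.Adj (f ⟨i, by omega⟩) (f ⟨i + 1, h⟩)) ∧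
    G.deg (f ⟨0, by omega⟩) = 1 ∧
    G.deg (f ⟨G.n - 1, by omega⟩) = 1 ∧
    ∀ (i : ℕ) (h : i < G.n), 0 < i → i + 1 < G.n → G.deg (f ⟨i, h⟩) = 2

/-!
An agent that has moved for `t` rounds knows nothing beyond the truncated view of its start node at
depth `t + 1`. Since a protocol that decides `P` halts on a no-instance after some fixed number of
rounds, a no-instance whose truncated views, at every depth, are also views of yes-instances makes
`P` undecidable. For `P` the class of paths, such a no-instance is the consistently labeled
triangle: an agent starting in the middle of a long path cannot tell the two apart before it comes
close to an end.
-/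

namespace PortGraph

variable {G H : PortGraph} {σ : AgentProtocol} {u : Fin G.n} {v : Fin H.n}

theorem view_succ_eq_iff {k : ℕ} :
    G.view (k + 1) u = H.view (k + 1) v ↔
      G.deg u = H.deg v ∧ ∀ i < G.deg u, (G.mtch u i).2 = (H.mtch v i).2 ∧
        G.view k (G.mtch u i).1 = H.view k (H.mtch v i).1 := by
  rw [view, view, ViewTree.node.injEq]
  constructor
  · intro h
    have hdeg : G.deg u = H.deg v := by simpa using congrArg List.length h
    rw [← hdeg, List.map_inj_left] at h
    refine ⟨hdeg, fun i hi => ?_⟩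
    simpa using h i (List.mem_range.mpr hi)
  · rintro ⟨hdeg, hnbr⟩
    rw [← hdeg, List.map_inj_left]
    intro i hi
    simpa using hnbr i (List.mem_range.mp hi)

theorem view_eq_of_view_succ_eq {k : ℕ} (h : G.view (k + 1) u = H.view (k + 1) v) :
    G.view k u = H.view k v := by
  induction k generalizing u v with
  | zero => rfl
  | succ k ih =>
    obtain ⟨hdeg, hnbr⟩ := view_succ_eq_iff.mp h
    exact view_succ_eq_iff.mpr ⟨hdeg, fun i hi => ⟨(hnbr i hi).1, ih (hnbr i hi).2⟩⟩

/-- Two agent states, possibly in different graphs, are `k`-indistinguishable if the agents have the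
same memory and their current nodes have the same truncated view at depth `k`. -/
structure Indistinguishable (k : ℕ) (c : AgentState G) (d : AgentState H) : Prop where
  hist_eq : c.hist = d.hist
  entry_eq : c.entry = d.entry
  view_eq : G.view k c.pos = H.view k d.pos

/-- The extra level of the view is what makes the degree observed after the move agree. -/
theorem Indistinguishable.stepAgent {k : ℕ} {c : AgentState G} {d : AgentState H}
    (h : Indistinguishable (k + 2) c d) :
    Indistinguishable (k + 1) (G.stepAgent σ c) (H.stepAgent σ d) := by
  obtain ⟨hdeg, hnbr⟩ := view_succ_eq_iff.mp h.view_eq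
  have hview : G.view (k + 1) (G.stepAgent σ c).pos = H.view (k + 1) (H.stepAgent σ d).pos ∧
      (G.stepAgent σ c).entry = (H.stepAgent σ d).entry := by
    have hstay := view_eq_of_view_succ_eq h.view_eq
    simp only [PortGraph.stepAgent, ← h.hist_eq, ← hdeg]
    cases σ c.hist with
    | halt _ => exact ⟨hstay, h.entry_eq⟩
    | move p =>
      by_cases hp : 1 ≤ p ∧ p - 1 < G.deg c.pos
      · simpa only [if_pos hp, Nat.add_right_cancel_iff] using (hnbr (p - 1) hp.2).symm
      · simpa only [if_neg hp] using ⟨hstay, h.entry_eq⟩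
  refine ⟨?_, hview.2, hview.1⟩
  change c.hist ++ [(G.deg (G.stepAgent σ c).pos, (G.stepAgent σ c).entry)] =
    d.hist ++ [(H.deg (H.stepAgent σ d).pos, (H.stepAgent σ d).entry)]
  rw [h.hist_eq, (view_succ_eq_iff.mp hview.1).1, hview.2]

theorem indistinguishable_run {k : ℕ} (s : ℕ) (h : G.view (k + 1 + s) u = H.view (k + 1 + s) v) :
    Indistinguishable (k + 1) (G.run σ u s) (H.run σ v s) := by
  induction s generalizing k with
  | zero => exact ⟨by simp only [run, (view_succ_eq_iff.mp h).1], rfl, h⟩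
  | succ s ih =>
    exact Indistinguishable.stepAgent (ih (k := k + 1) (by rwa [add_right_comm (k + 1) 1 s]))

theorem actAt_eq_of_view_eq {s t : ℕ} (hst : s ≤ t) (h : G.view (t + 1) u = H.view (t + 1) v) :
    G.actAt σ u s = H.actAt σ v s := by
  obtain ⟨k, rfl⟩ := Nat.exists_eq_add_of_le' hst
  rw [add_right_comm] at h
  exact congrArg σ (indistinguishable_run s h).hist_eq

theorem haltsAtWith_of_view_eq {t : ℕ} {b : Bool} (h : G.view (t + 1) u = H.view (t + 1) v)
    (hhalt : H.haltsAtWith σ v t b) : G.haltsAtWith σ u t b := by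
  refine ⟨(actAt_eq_of_view_eq le_rfl h).trans hhalt.1, fun s hs b' => ?_⟩
  rw [actAt_eq_of_view_eq hs.le h]
  exact hhalt.2 s hs b'

theorem haltsAtWith_decision_unique {s t : ℕ} {b b' : Bool} (hs : G.haltsAtWith σ u s b)
    (ht : G.haltsAtWith σ u t b') : b = b' := by
  obtain hst | rfl | hts := lt_trichotomy s t
  · exact absurd hs.1 (ht.2 s hst b)
  · exact AgentAction.halt.inj (hs.1.symm.trans ht.1)
  · exact absurd ht.1 (hs.2 t hts b')

end PortGraph

theorem not_MAD1_of_forall_view_eq {P : (G : PortGraph) → Fin G.n → Prop} {H : PortGraph}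
    {v : Fin H.n} (hno : ¬ P H v)
    (hyes : ∀ t, ∃ (G : PortGraph) (u : Fin G.n), P G u ∧ G.view t u = H.view t v) :
    ¬ MAD1 P := by
  rintro ⟨σ, hhalts, hdecides⟩
  obtain ⟨t, b, hH⟩ := hhalts H v
  obtain ⟨G, u, hP, hview⟩ := hyes (t + 1)
  obtain ⟨s, hG⟩ := (hdecides G u).mpr hP
  obtain rfl : true = b :=
    PortGraph.haltsAtWith_decision_unique hG (PortGraph.haltsAtWith_of_view_eq hview hH)
  exact hno ((hdecides H v).mp ⟨t, hH⟩)

namespace PortGraph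

/-- The triangle labeled so that port `1` leads clockwise and port `2` counterclockwise. -/
def orientedTriangle : PortGraph where
  n := 3
  npos := by decide
  deg _ := 2
  mtch v i := if i = 0 then (v + 1, 1) else (v - 1, 0)
  mtch_lt _ _ _ := by grind
  mtch_invol _ _ _ := by grind
  no_loops _ _ _ := by grind
  no_multi _ _ _ _ _ := by grind
  connected u v := by
    obtain rfl | huv := eq_or_ne u v
    · exact .refl
    · exact .single (by revert u v; decide)

theorem not_isPath_orientedTriangle : ¬ IsPath orientedTriangle := by
  rintro ⟨_, _, _, hend, _⟩
  exact absurd hend (Nat.succ_ne_self 1)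

section Path

variable {m : ℕ}

/-- Degrees of the nodes of the path `0, 1, …, m + 1`. -/
def pathDeg (v : Fin (m + 2)) : ℕ := if v.val = 0 ∨ v.val = m + 1 then 1 else 2

theorem pathDeg_zero : pathDeg (0 : Fin (m + 2)) = 1 := if_pos (.inl rfl)

theorem pathDeg_last : pathDeg (Fin.last (m + 1)) = 1 := if_pos (.inr rfl)

theorem pathDeg_eq_two {v : Fin (m + 2)} (hpos : 0 < v.val) (hlast : v.val < m + 1) :
    pathDeg v = 2 :=
  if_neg (by omega)

/-- The dart matching of the path `0, 1, …, m + 1`: port `1` leads to the next node and port `2` to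
the previous one, except that the only port of the last node leads to the previous node. The
truncated subtraction `0 - 1` occurs only at ports that node `0` does not have. -/
def pathMatching (v : Fin (m + 2)) (i : ℕ) : Fin (m + 2) × ℕ :=
  if h : v.val = m + 1 ∨ i ≠ 0 then (⟨v - 1, by omega⟩, 0)
  else (⟨v + 1, by omega⟩, if v.val = m then 0 else 1)

theorem pathMatching_zero {v : Fin (m + 2)} (hv : v.val < m) :
    pathMatching v 0 = (⟨v + 1, by omega⟩, 1) := by
  grind [pathMatching]

theorem pathMatching_one {v : Fin (m + 2)} : pathMatching v 1 = (⟨v - 1, by omega⟩, 0) := by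
  grind [pathMatching]

theorem pathMatching_lt (v : Fin (m + 2)) (i : ℕ) :
    (pathMatching v i).2 < pathDeg (pathMatching v i).1 := by
  grind [pathDeg, pathMatching]

theorem pathMatching_pathMatching {v : Fin (m + 2)} {i : ℕ} (hi : i < pathDeg v) :
    pathMatching (pathMatching v i).1 (pathMatching v i).2 = (v, i) := by
  grind [pathDeg, pathMatching]

theorem exists_pathMatching_eq_succ {a : ℕ} (h : a + 1 < m + 2) :
    ∃ i < pathDeg (m := m) ⟨a, by omega⟩,
      (pathMatching (m := m) ⟨a, by omega⟩ i).1 = ⟨a + 1, h⟩ :=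
  ⟨0, by grind [pathDeg], by grind [pathMatching]⟩

theorem reflTransGen_pathMatching (u v : Fin (m + 2)) :
    Relation.ReflTransGen (fun a b => ∃ i < pathDeg a, (pathMatching a i).1 = b) u v := by
  have hsymm : Std.Symm fun a b : Fin (m + 2) =>
      ∃ i < pathDeg a, (pathMatching a i).1 = b := by
    constructor
    rintro a _ ⟨i, hi, rfl⟩
    exact ⟨_, pathMatching_lt a i, congrArg Prod.fst (pathMatching_pathMatching hi)⟩
  have hzero (w : Fin (m + 2)) :
      Relation.ReflTransGen (fun a b => ∃ i < pathDeg a, (pathMatching a i).1 = b) 0 w := by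
    induction w using Fin.induction with
    | zero => exact .refl
    | succ w ih => exact ih.tail (exists_pathMatching_eq_succ w.succ.isLt)
  exact (symm (hzero u)).trans (hzero v)

variable (m) in
/-- The path with `m + 2` nodes, listed in order as `0, 1, …, m + 1`. -/
def path : PortGraph where
  n := m + 2
  npos := by omega
  deg := pathDeg
  mtch := pathMatching
  mtch_lt v i _ := pathMatching_lt v i
  mtch_invol _ _ := pathMatching_pathMatching
  no_loops _ _ _ := by grind [pathDeg, pathMatching]
  no_multi _ _ _ _ _ := by grind [pathDeg, pathMatching]
  connected := reflTransGen_pathMatching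

theorem isPath_path : IsPath (path m) :=
  ⟨Nat.le_add_left 2 m, Equiv.refl _, fun _ => exists_pathMatching_eq_succ,
    pathDeg_zero (m := m), pathDeg_last (m := m),
    fun _ _ hpos hlast => pathDeg_eq_two hpos (Nat.lt_of_succ_lt_succ hlast)⟩

theorem view_path_eq_view_orientedTriangle {k : ℕ} {v : Fin (m + 2)}
    (w : Fin orientedTriangle.n) (hleft : k ≤ v) (hright : v + k < m + 1) :
    (path m).view k v = orientedTriangle.view k w := by
  induction k generalizing v w with
  | zero => rfl
  | succ k ih =>
    have hdeg : (path m).deg v = 2 := pathDeg_eq_two (by omega) (by omega)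
    refine view_succ_eq_iff.mpr ⟨hdeg, fun i hi => ?_⟩
    obtain rfl | rfl : i = 0 ∨ i = 1 := by omega
    · have hmtch : (path m).mtch v 0 = ((⟨v + 1, by omega⟩ : Fin (m + 2)), 1) :=
        pathMatching_zero (by omega)
      rw [hmtch]
      exact ⟨rfl, ih _ (by simp only; omega) (by simp only; omega)⟩
    · have hmtch : (path m).mtch v 1 = ((⟨v - 1, by omega⟩ : Fin (m + 2)), 0) :=
        pathMatching_one
      rw [hmtch]
      exact ⟨rfl, ih _ (by simp only; omega) (by simp only; omega)⟩

theorem exists_isPath_view_eq_view_orientedTriangle (w : Fin orientedTriangle.n) (t : ℕ) :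
    ∃ (G : PortGraph) (u : Fin G.n), IsPath G ∧ G.view t u = orientedTriangle.view t w :=
  have ht : t < 2 * t + 2 := by omega
  ⟨path (2 * t), ⟨t, ht⟩, isPath_path,
    view_path_eq_view_orientedTriangle w le_rfl (by simp only; omega)⟩

end Path

end PortGraph

/-- No single-agent protocol always halts and halts with "yes" exactly
on the port-labeled graphs that are paths. -/
theorem path_not_single_agent_decidable :
    ¬ ∃ σ : AgentProtocol,
        (∀ (G : PortGraph) (v : Fin G.n), G.halts σ v) ∧
        ∀ (G : PortGraph) (v : Fin G.n), (G.decides σ v true ↔ IsPath G) :=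
  not_MAD1_of_forall_view_eq (P := fun G _ => IsPath G) PortGraph.not_isPath_orientedTriangle
    (PortGraph.exists_isPath_view_eq_view_orientedTriangle (0 : Fin 3))
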